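/- Fix δ ∈ (0,1). Consider an asymptotic regime where (n, p, k) → ∞ with k/p → 0 and where the number of unlabeled samples satisfies n < 2(1−δ)·(k/λ²)·log(p−k+1)·max{1, λ}. Then for any estimator Ŝ of the support based on the n unlabeled samples D_n, as p → ∞, the worst-case error probability satisfies max over k-element supports S of P(Ŝ ≠ S) ≥ δ. -/

import Mathlib

open MeasureTheory ProbabilityTheory Filter
open scoped ENNReal NNReal

noncomputable section

/-- Product of independent one-dimensional Gaussians `N(m j, 1)`: the law of `N(m, I_p)`. -/
def gaussPi {p : ℕ} (m : Fin p → ℝ) : Measure (Fin p → ℝ) :=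
  Measure.pi fun j => gaussianReal (m j) 1

/-- The law of one unlabeled sample `x` from the symmetric sparse Gaussian mixture model:
an equal-weight mixture of `N(μ, I_p)` and `N(-μ, I_p)`. -/
def unlabeledLaw {p : ℕ} (m : Fin p → ℝ) : Measure (Fin p → ℝ) :=
  (2 : ℝ≥0∞)⁻¹ • gaussPi m + (2 : ℝ≥0∞)⁻¹ • gaussPi (fun j => -m j)

/-- The `k`-sparse mean vector with support `S` and nonzero entries `√(λ/k)`. -/
def muVec (p k : ℕ) (lam : ℝ) (S : Finset (Fin p)) : Fin p → ℝ :=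
  fun j => if j ∈ S then Real.sqrt (lam / k) else 0

/-!
Tilting `N(0, I_p)` by `log cosh (m ⬝ᵥ x)` gives the unlabeled law with mean `m`. Hence, if `c` is
the orthogonal projection of `m` on the line of `c`, the Kullback–Leibler divergence of the law with
mean `m` relative to the law with mean `c` is `ψ(‖m‖) - ψ(‖c‖) - (‖m‖² - ‖c‖²) / 2`, where `ψ(r)` is
the mean of `log cosh (r y)` under `y ∼ N(r, 1)`. Stein's identity and the Nishimori identity
`E tanh² (r y) = E tanh (r y)` give `ψ'(r) = r (1 + E tanh (r y))` with
`E tanh (r y) ≤ min(1, r²)`, so the divergence is at most `(‖m‖² - ‖c‖²) / 2 · min(1, ‖m‖²)`.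

Fix a set `S₀` of `k - 1` coordinates and consider the `p - k + 1` supports `S₀ ∪ {j}`. Taking the
model with mean supported on `S₀` as the reference law, the divergence per sample is at most
`λ / (2k) · min(1, λ)`, and Fano's inequality concludes because `min(1, λ) · max(1, λ) = λ`.
-/

section Hyperbolic

lemma hasDerivAt_tanh (x : ℝ) : HasDerivAt Real.tanh (1 - Real.tanh x ^ 2) x := by
  have hcosh := (Real.cosh_pos x).ne'
  have hquot := (Real.hasDerivAt_sinh x).div (Real.hasDerivAt_cosh x) hcosh
  have heq : Real.sinh / Real.cosh = Real.tanh := funext fun y =>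
    (Real.tanh_eq_sinh_div_cosh y).symm
  rw [heq] at hquot
  refine hquot.congr_deriv ?_
  rw [Real.tanh_eq_sinh_div_cosh]
  field_simp

@[fun_prop]
lemma continuous_tanh : Continuous Real.tanh :=
  continuous_iff_continuousAt.2 fun x => (hasDerivAt_tanh x).continuousAt

lemma hasDerivAt_log_cosh (x : ℝ) :
    HasDerivAt (fun y => Real.log (Real.cosh y)) (Real.tanh x) x := by
  rw [Real.tanh_eq_sinh_div_cosh]
  exact (Real.hasDerivAt_cosh x).log (Real.cosh_pos x).ne'

lemma continuous_log_cosh : Continuous fun x => Real.log (Real.cosh x) :=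
  continuous_iff_continuousAt.2 fun x => (hasDerivAt_log_cosh x).continuousAt

lemma abs_log_cosh_le_abs (x : ℝ) : |Real.log (Real.cosh x)| ≤ |x| := by
  have hcosh : Real.cosh x ≤ Real.exp |x| := by
    rw [← Real.cosh_abs, Real.cosh_eq]
    linarith [Real.exp_le_exp.2 (neg_le_self (abs_nonneg x))]
  rw [abs_of_nonneg (Real.log_nonneg (Real.one_le_cosh x))]
  exact (Real.log_le_iff_le_exp (Real.cosh_pos x)).2 hcosh

lemma tanh_mul_sinh_le_mul_sinh (x : ℝ) : Real.tanh x * Real.sinh x ≤ x * Real.sinh x := by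
  have hmono : Monotone fun y => y - Real.tanh y :=
    monotone_of_hasDerivAt_nonneg (fun y => (hasDerivAt_id y).sub (hasDerivAt_tanh y))
      fun y => by simp only [sub_sub_cancel]; exact sq_nonneg _
  rcases le_total 0 x with hx | hx
  · have := hmono hx
    simp only [Real.tanh_zero, sub_zero] at this
    exact mul_le_mul_of_nonneg_right (by linarith) (Real.sinh_nonneg_iff.2 hx)
  · have := hmono hx
    simp only [Real.tanh_zero, sub_zero] at this
    exact mul_le_mul_of_nonpos_right (by linarith) (Real.sinh_nonpos_iff.2 hx)

variable {α : Type*} [MeasurableSpace α] {μ : Measure α} {u : α → ℝ}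

lemma integrable_log_cosh_comp (hu : Integrable u μ) :
    Integrable (fun x => Real.log (Real.cosh (u x))) μ :=
  hu.mono (continuous_log_cosh.comp_aestronglyMeasurable hu.aestronglyMeasurable)
    (ae_of_all _ fun x => abs_log_cosh_le_abs (u x))

lemma integrable_tanh_comp [IsFiniteMeasure μ] (hu : AEStronglyMeasurable u μ) :
    Integrable (fun x => Real.tanh (u x)) μ :=
  .of_bound (continuous_tanh.comp_aestronglyMeasurable hu) 1
    (ae_of_all _ fun x => (Real.abs_tanh_lt_one (u x)).le)

lemma integrable_tanh_sq_comp [IsFiniteMeasure μ] (hu : AEStronglyMeasurable u μ) :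
    Integrable (fun x => Real.tanh (u x) ^ 2) μ :=
  .of_bound ((continuous_tanh.comp_aestronglyMeasurable hu).pow 2) 1 (ae_of_all _ fun x => by
    rw [Real.norm_of_nonneg (sq_nonneg _)]
    exact (Real.tanh_sq_lt_one (u x)).le)

end Hyperbolic

section Gaussian

lemma integral_exp_mul_gaussianReal (μ t : ℝ) (v : ℝ≥0) :
    ∫ x, Real.exp (t * x) ∂gaussianReal μ v = Real.exp (μ * t + v * t ^ 2 / 2) :=
  congrFun mgf_fun_id_gaussianReal t

lemma tilted_mul_gaussianReal (μ t : ℝ) {v : ℝ≥0} (hv : v ≠ 0) :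
    (gaussianReal μ v).tilted (fun x => t * x) = gaussianReal (μ + v * t) v := by
  have hv' : (v : ℝ) ≠ 0 := NNReal.coe_ne_zero.2 hv
  rw [Measure.tilted, integral_exp_mul_gaussianReal, gaussianReal_of_var_ne_zero _ hv,
    gaussianReal_of_var_ne_zero _ hv,
    ← withDensity_mul _ (measurable_gaussianPDF _ _) (by fun_prop)]
  congr 1
  ext x
  rw [Pi.mul_apply, gaussianPDF, gaussianPDF, ← ENNReal.ofReal_mul (gaussianPDFReal_nonneg _ _ _),
    gaussianPDFReal, gaussianPDFReal, mul_assoc, ← Real.exp_sub, ← Real.exp_add]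
  congr 3
  field_simp
  ring

lemma integral_gaussianReal_eq_integral_symm {r : ℝ} {h : ℝ → ℝ}
    (hint : Integrable h (gaussianReal r 1)) :
    ∫ y, h y ∂gaussianReal r 1 = Real.exp (-(r ^ 2 / 2)) / 2 *
      ∫ z, (h z * Real.exp (r * z) + h (-z) * Real.exp (-(r * z))) ∂gaussianReal 0 1 := by
  have htilt : gaussianReal r 1 = (gaussianReal 0 1).tilted fun z => r * z := by
    rw [tilted_mul_gaussianReal 0 r one_ne_zero, NNReal.coe_one, zero_add, one_mul]
  have hmgf : ∫ z, Real.exp (r * z) ∂gaussianReal 0 1 = Real.exp (r ^ 2 / 2) := by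
    simpa using integral_exp_mul_gaussianReal 0 r 1
  have hint' : Integrable (fun z => h z * Real.exp (r * z)) (gaussianReal 0 1) := by
    rw [htilt, integrable_tilted_iff (integrable_exp_mul_gaussianReal r)] at hint
    simpa only [smul_eq_mul, mul_comm] using hint
  have hneg : MeasurePreserving (fun z : ℝ => -z) (gaussianReal 0 1) (gaussianReal 0 1) :=
    ⟨measurable_neg, by rw [gaussianReal_map_neg, neg_zero]⟩
  have hemb : MeasurableEmbedding (fun z : ℝ => -z) := (MeasurableEquiv.neg ℝ).measurableEmbedding
  have hflip := hneg.integral_comp hemb fun z => h z * Real.exp (r * z)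
  have hint_flip := (hneg.integrable_comp_emb hemb).2 hint'
  simp only [mul_neg, Function.comp_def] at hflip hint_flip
  rw [integral_add hint' hint_flip, hflip, htilt, integral_tilted, hmgf]
  simp only [smul_eq_mul, div_mul_eq_mul_div, integral_div, Real.exp_neg, mul_comm (Real.exp _)]
  ring

/-- Stein's identity. -/
lemma integral_sub_mean_mul_gaussianReal {μ : ℝ} {v : ℝ≥0} {g g' : ℝ → ℝ}
    (hg : ∀ x, HasDerivAt g (g' x) x) (hint : Integrable g (gaussianReal μ v))
    (hint' : Integrable g' (gaussianReal μ v))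
    (hint_mul : Integrable (fun x => (x - μ) * g x) (gaussianReal μ v)) :
    ∫ x, (x - μ) * g x ∂gaussianReal μ v = v * ∫ x, g' x ∂gaussianReal μ v := by
  rcases eq_or_ne v 0 with rfl | hv
  · simp [gaussianReal_zero_var]
  have hv' : (v : ℝ) ≠ 0 := NNReal.coe_ne_zero.2 hv
  have hpdf : ∀ x, HasDerivAt (gaussianPDFReal μ v) (-((x - μ) / v) * gaussianPDFReal μ v x) x := by
    intro x
    have hexp := ((((hasDerivAt_id x).sub_const μ).pow 2).neg.div_const (2 * (v : ℝ))).exp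
    refine (hexp.const_mul (√(2 * Real.pi * v))⁻¹).congr_deriv ?_
    simp only [gaussianPDFReal, Pi.neg_apply, Pi.pow_apply, id]
    field_simp
    ring
  have hiff : ∀ f : ℝ → ℝ, Integrable f (gaussianReal μ v) ↔
      Integrable fun x => gaussianPDFReal μ v x * f x := fun f => by
    rw [gaussianReal_of_var_ne_zero _ hv, integrable_withDensity_iff_integrable_smul'
      (measurable_gaussianPDF _ _) (ae_of_all _ fun _ => gaussianPDF_lt_top)]
    simp only [toReal_gaussianPDF, smul_eq_mul]
  rw [hiff] at hint hint' hint_mul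
  have hparts := integral_mul_deriv_eq_deriv_mul_of_integrable (u := g) (u' := g')
    (fun x _ => hg x) (fun x _ => hpdf x)
    ((hint_mul.const_mul (-(v : ℝ)⁻¹)).congr
      (ae_of_all _ fun x => by simp only [Pi.mul_apply]; ring))
    (hint'.congr (ae_of_all _ fun x => mul_comm _ _))
    (hint.congr (ae_of_all _ fun x => mul_comm _ _))
  rw [integral_gaussianReal_eq_integral_smul hv, integral_gaussianReal_eq_integral_smul hv]
  simp only [smul_eq_mul]
  calc ∫ x, gaussianPDFReal μ v x * ((x - μ) * g x)
      = ∫ x, -(v : ℝ) * (g x * (-((x - μ) / v) * gaussianPDFReal μ v x)) := by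
        congr 1 with x
        field_simp
    _ = v * ∫ x, gaussianPDFReal μ v x * g' x := by
        rw [integral_const_mul, hparts, neg_mul_neg]
        simp only [mul_comm (g' _)]

/-- The Nishimori identity. -/
lemma integral_tanh_sq_gaussianReal (r : ℝ) :
    ∫ y, Real.tanh (r * y) ^ 2 ∂gaussianReal r 1 = ∫ y, Real.tanh (r * y) ∂gaussianReal r 1 := by
  rw [integral_gaussianReal_eq_integral_symm (integrable_tanh_comp (by fun_prop)),
    integral_gaussianReal_eq_integral_symm (integrable_tanh_sq_comp (by fun_prop))]
  congr 2 with z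
  have hcosh := (Real.cosh_pos (r * z)).ne'
  rw [mul_neg, Real.tanh_neg, Real.tanh_eq_sinh_div_cosh, ← Real.cosh_add_sinh,
    ← Real.cosh_sub_sinh]
  field_simp
  ring

lemma integral_tanh_gaussianReal_le_one (r : ℝ) :
    ∫ y, Real.tanh (r * y) ∂gaussianReal r 1 ≤ 1 := by
  simpa using integral_mono (μ := gaussianReal r 1) (integrable_tanh_comp (by fun_prop))
    (integrable_const 1) fun y => (Real.tanh_lt_one (r * y)).le

lemma integrable_id_gaussianReal (μ : ℝ) (v : ℝ≥0) :
    Integrable (fun x => x) (gaussianReal μ v) :=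
  (memLp_id_gaussianReal 1).integrable le_rfl

lemma integral_tanh_gaussianReal_le_sq (r : ℝ) :
    ∫ y, Real.tanh (r * y) ∂gaussianReal r 1 ≤ r ^ 2 := by
  have htanh : Integrable (fun y => Real.tanh (r * y)) (gaussianReal r 1) :=
    integrable_tanh_comp (by fun_prop)
  have hlin : Integrable (fun y => r * y) (gaussianReal r 1) :=
    (integrable_id_gaussianReal r 1).const_mul r
  have hnonneg : 0 ≤ ∫ y, (r * y - Real.tanh (r * y)) ∂gaussianReal r 1 := by
    rw [integral_gaussianReal_eq_integral_symm
      (h := fun y => r * y - Real.tanh (r * y)) (hlin.sub htanh)]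
    refine mul_nonneg (by positivity) (integral_nonneg fun z => ?_)
    simp only [Pi.zero_apply, mul_neg, Real.tanh_neg]
    calc 0 ≤ 2 * (r * z * Real.sinh (r * z) - Real.tanh (r * z) * Real.sinh (r * z)) := by
          linarith [tanh_mul_sinh_le_mul_sinh (r * z)]
      _ = _ := by
        rw [Real.sinh_eq]
        ring
  rw [integral_sub hlin htanh, integral_const_mul, integral_id_gaussianReal] at hnonneg
  linarith [sq r]

end Gaussian

section MeanLogCosh

/-- The mean of `log cosh (r y)` under `y ∼ N(r, 1)`, which carries the whole non-quadratic part of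
the log-likelihood of the symmetric mixture with mean of norm `r`. -/
def meanLogCosh (r : ℝ) : ℝ :=
  ∫ y, Real.log (Real.cosh (r * y)) ∂gaussianReal r 1

lemma integral_gaussianReal_eq_integral_const_add (r : ℝ) (v : ℝ≥0) (f : ℝ → ℝ) :
    ∫ y, f y ∂gaussianReal r v = ∫ z, f (r + z) ∂gaussianReal 0 v := by
  have hshift : (gaussianReal 0 v).map (r + ·) = gaussianReal r v := by
    rw [gaussianReal_map_const_add, zero_add]
  rw [← hshift, (measurableEmbedding_addLeft r).integral_map]

lemma hasDerivAt_meanLogCosh_integral (r : ℝ) :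
    HasDerivAt meanLogCosh
      (∫ y, Real.tanh (r * y) * (r + y) ∂gaussianReal r 1) r := by
  have hpt : ∀ z s : ℝ, HasDerivAt (fun s => Real.log (Real.cosh (s * (s + z))))
      (Real.tanh (s * (s + z)) * (s + (s + z))) s := fun z s => by
    have hmul : HasDerivAt (fun s => s * (s + z)) (s + (s + z)) s :=
      ((hasDerivAt_id s).mul ((hasDerivAt_id s).add_const z)).congr_deriv
        (by simp only [id, one_mul, mul_one]; ring)
    exact (hasDerivAt_log_cosh (s * (s + z))).comp s hmul
  have hbound : ∀ z : ℝ, ∀ s ∈ Metric.ball r 1,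
      ‖Real.tanh (s * (s + z)) * (s + (s + z))‖ ≤ 2 * (|r| + 1) + |z| := fun z s hs => by
    have hs' : |s| ≤ |r| + 1 := by
      have := abs_sub_abs_le_abs_sub s r
      have := Real.dist_eq s r ▸ Metric.mem_ball.1 hs
      linarith
    rw [norm_mul]
    calc ‖Real.tanh (s * (s + z))‖ * ‖s + (s + z)‖ ≤ 1 * (|s| + (|s| + |z|)) :=
          mul_le_mul (Real.abs_tanh_lt_one _).le
            ((norm_add_le _ _).trans (add_le_add le_rfl (norm_add_le _ _)))
            (norm_nonneg _) zero_le_one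
      _ ≤ 2 * (|r| + 1) + |z| := by linarith
  have habs : Integrable (fun z => |z|) (gaussianReal 0 1) :=
    (integrable_id_gaussianReal 0 1).abs
  have hlin : Integrable (fun z => r * (r + z)) (gaussianReal 0 1) :=
    ((integrable_const r).add (integrable_id_gaussianReal 0 1)).const_mul r
  have hderiv := (hasDerivAt_integral_of_dominated_loc_of_deriv_le
    (F := fun s z => Real.log (Real.cosh (s * (s + z)))) (Metric.ball_mem_nhds r one_pos)
    (.of_forall fun s => (continuous_log_cosh.comp (by fun_prop)).aestronglyMeasurable)
    (integrable_log_cosh_comp hlin) (by fun_prop)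
    (ae_of_all _ hbound) ((integrable_const _).add habs)
    (ae_of_all _ fun z s _ => hpt z s)).2
  have heq : meanLogCosh = fun s => ∫ z, Real.log (Real.cosh (s * (s + z))) ∂gaussianReal 0 1 :=
    funext fun s => integral_gaussianReal_eq_integral_const_add s 1 _
  rwa [heq, integral_gaussianReal_eq_integral_const_add]

lemma hasDerivAt_meanLogCosh (r : ℝ) :
    HasDerivAt meanLogCosh (r * (1 + ∫ y, Real.tanh (r * y) ∂gaussianReal r 1)) r := by
  have htanh : Integrable (fun y => Real.tanh (r * y)) (gaussianReal r 1) :=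
    integrable_tanh_comp (by fun_prop)
  have htanh_sq : Integrable (fun y => Real.tanh (r * y) ^ 2) (gaussianReal r 1) :=
    integrable_tanh_sq_comp (by fun_prop)
  have hmul : Integrable (fun y => (y - r) * Real.tanh (r * y)) (gaussianReal r 1) :=
    ((integrable_id_gaussianReal r 1).sub (integrable_const r)).mul_bdd (c := 1) (by fun_prop)
      (ae_of_all _ fun _ => (Real.abs_tanh_lt_one _).le)
  have hstein : ∫ y, (y - r) * Real.tanh (r * y) ∂gaussianReal r 1 =
      r * (1 - ∫ y, Real.tanh (r * y) ∂gaussianReal r 1) := by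
    have hderiv : ∀ y, HasDerivAt (fun y => Real.tanh (r * y))
        (r * (1 - Real.tanh (r * y) ^ 2)) y := fun y =>
      ((hasDerivAt_tanh (r * y)).comp y ((hasDerivAt_id y).const_mul r)).congr_deriv (by ring)
    rw [integral_sub_mean_mul_gaussianReal hderiv htanh
        (((integrable_const 1).sub htanh_sq).const_mul r) hmul, integral_const_mul,
      integral_sub (integrable_const 1) htanh_sq, integral_tanh_sq_gaussianReal]
    simp
  refine (hasDerivAt_meanLogCosh_integral r).congr_deriv ?_
  calc ∫ y, Real.tanh (r * y) * (r + y) ∂gaussianReal r 1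
      = ∫ y, (2 * r * Real.tanh (r * y) + (y - r) * Real.tanh (r * y)) ∂gaussianReal r 1 := by
        congr 1 with y
        ring
    _ = r * (1 + ∫ y, Real.tanh (r * y) ∂gaussianReal r 1) := by
        rw [integral_add (htanh.const_mul _) hmul, integral_const_mul, hstein]
        ring

lemma meanLogCosh_sub_le {r R : ℝ} (hr : 0 ≤ r) (hrR : r ≤ R) :
    meanLogCosh R - meanLogCosh r ≤ (R ^ 2 - r ^ 2) / 2 * (1 + min 1 (R ^ 2)) := by
  have hderiv : ∀ s, HasDerivAt
      (fun s => s ^ 2 / 2 * (1 + min 1 (R ^ 2)) - meanLogCosh s)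
      (s * (min 1 (R ^ 2) - ∫ y, Real.tanh (s * y) ∂gaussianReal s 1)) s := fun s =>
    ((((hasDerivAt_pow 2 s).div_const 2).mul_const _).sub (hasDerivAt_meanLogCosh s)).congr_deriv
      (by push_cast; ring)
  have hmono : MonotoneOn (fun s => s ^ 2 / 2 * (1 + min 1 (R ^ 2)) - meanLogCosh s)
      (Set.Icc 0 R) := by
    refine monotoneOn_of_deriv_nonneg (convex_Icc 0 R)
      (fun s _ => (hderiv s).continuousAt.continuousWithinAt)
      (fun s _ => (hderiv s).differentiableAt.differentiableWithinAt) fun s hs => ?_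
    rw [interior_Icc] at hs
    rw [(hderiv s).deriv]
    refine mul_nonneg hs.1.le (sub_nonneg.2 (le_min (integral_tanh_gaussianReal_le_one s) ?_))
    exact (integral_tanh_gaussianReal_le_sq s).trans (pow_le_pow_left₀ hs.1.le hs.2.le 2)
  linarith [hmono ⟨hr, hrR⟩ ⟨hr.trans hrR, le_rfl⟩ hrR]

end MeanLogCosh

section KullbackLeibler

open InformationTheory

variable {α β : Type*} [MeasurableSpace α] [MeasurableSpace β]

lemma klDiv_map_measurableEquiv (μ ν : Measure α) [IsFiniteMeasure μ] [IsFiniteMeasure ν]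
    (e : α ≃ᵐ β) : klDiv (μ.map e) (ν.map e) = klDiv μ ν := by
  refine le_antisymm (klDiv_map_le _ _ e.measurable) ?_
  simpa only [e.map_symm_map] using
    klDiv_map_le (μ.map e) (ν.map e) e.symm.measurable

lemma klDiv_prod (μ₁ ν₁ : Measure α) (μ₂ ν₂ : Measure β) [IsProbabilityMeasure μ₁]
    [IsFiniteMeasure ν₁] [IsProbabilityMeasure μ₂] [IsProbabilityMeasure ν₂] :
    klDiv (μ₁.prod μ₂) (ν₁.prod ν₂) = klDiv μ₁ ν₁ + klDiv μ₂ ν₂ := by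
  have hswap : klDiv (μ₁.prod μ₂) (μ₁.prod ν₂) = klDiv (μ₂.prod μ₁) (ν₂.prod μ₁) := by
    rw [← klDiv_map_measurableEquiv _ _ MeasurableEquiv.prodComm]
    exact congrArg₂ klDiv Measure.prod_swap Measure.prod_swap
  simp only [← Measure.compProd_const] at hswap ⊢
  rw [klDiv_compProd_eq_add, hswap, klDiv_compProd_left]

lemma klDiv_pi_fin {n : ℕ} {γ : Fin n → Type*} [∀ i, MeasurableSpace (γ i)]
    (μ ν : ∀ i, Measure (γ i)) [∀ i, IsProbabilityMeasure (μ i)]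
    [∀ i, IsProbabilityMeasure (ν i)] :
    klDiv (Measure.pi μ) (Measure.pi ν) = ∑ i, klDiv (μ i) (ν i) := by
  induction n with
  | zero =>
    rw [Measure.pi_of_empty, Measure.pi_of_empty, klDiv_self, Finset.univ_eq_empty,
      Finset.sum_empty]
  | succ n ih =>
    rw [← klDiv_map_measurableEquiv _ _ (MeasurableEquiv.piFinSuccAbove γ 0),
      (measurePreserving_piFinSuccAbove μ 0).map_eq,
      (measurePreserving_piFinSuccAbove ν 0).map_eq, klDiv_prod, ih, Fin.sum_univ_succAbove _ 0]

lemma klDiv_tilted_tilted (ν : Measure α) [IsProbabilityMeasure ν] {f g : α → ℝ}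
    (hf_exp : Integrable (fun x => Real.exp (f x)) ν)
    (hg_exp : Integrable (fun x => Real.exp (g x)) ν)
    (hf : Integrable f (ν.tilted f)) (hg : Integrable g (ν.tilted f)) :
    klDiv (ν.tilted f) (ν.tilted g) = ENNReal.ofReal
      (∫ x, f x ∂ν.tilted f - ∫ x, g x ∂ν.tilted f
        - Real.log (∫ x, Real.exp (f x) ∂ν) + Real.log (∫ x, Real.exp (g x) ∂ν)) := by
  have := isProbabilityMeasure_tilted hf_exp
  have := isProbabilityMeasure_tilted hg_exp
  have hac : ν.tilted f ≪ ν := tilted_absolutelyContinuous ν f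
  have hllr : llr (ν.tilted f) ν =ᵐ[ν.tilted f]
      fun x => f x - Real.log (∫ x, Real.exp (f x) ∂ν) :=
    hac.ae_le (log_rnDeriv_tilted_left_self hf_exp)
  have hllr_int : Integrable (llr (ν.tilted f) ν) (ν.tilted f) :=
    (hf.sub (integrable_const _)).congr hllr.symm
  rw [klDiv_of_ac_of_integrable (hac.trans (absolutelyContinuous_tilted hg_exp))
      (integrable_llr_tilted_right hac hg hllr_int hg_exp),
    integral_llr_tilted_right hac hg hg_exp hllr_int, integral_congr_ae hllr,
    integral_sub hf (integrable_const _)]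
  simp only [integral_const, probReal_univ, one_smul, add_sub_cancel_right]
  congr 1
  ring

/-- The Donsker–Varadhan inequality. -/
lemma integral_sub_log_integral_exp_le_toReal_klDiv {μ ν : Measure α} [IsProbabilityMeasure μ]
    [IsProbabilityMeasure ν] {f : α → ℝ} (hμν : klDiv μ ν ≠ ∞) (hf : Integrable f μ)
    (hf_exp : Integrable (fun x => Real.exp (f x)) ν) :
    ∫ x, f x ∂μ - Real.log (∫ x, Real.exp (f x) ∂ν) ≤ (klDiv μ ν).toReal := by
  obtain ⟨hac, hllr⟩ := klDiv_ne_top_iff.1 hμν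
  have := isProbabilityMeasure_tilted hf_exp
  have hgibbs := integral_llr_add_sub_measure_univ_nonneg
    (hac.trans (absolutelyContinuous_tilted hf_exp))
    (integrable_llr_tilted_right hac hf hllr hf_exp)
  rw [integral_llr_tilted_right hac hf hf_exp hllr, probReal_univ, probReal_univ] at hgibbs
  rw [toReal_klDiv_of_measure_eq hac (by simp only [measure_univ])]
  linarith

lemma measureReal_mul_log_le_toReal_klDiv_add_log_two {μ ν : Measure α}
    [IsProbabilityMeasure μ] [IsProbabilityMeasure ν] (hμν : klDiv μ ν ≠ ∞) {D : Set α}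
    (hD : MeasurableSet D) {M : ℝ} (hM : 1 ≤ M) (hνD : ν.real D ≤ 1 / M) :
    μ.real D * Real.log M ≤ (klDiv μ ν).toReal + Real.log 2 := by
  have hM0 : 0 < M := one_pos.trans_le hM
  have hexp : ∀ x, Real.exp (D.indicator (fun _ => Real.log M) x)
      = D.indicator (fun _ => M - 1) x + 1 := fun x => by
    by_cases hx : x ∈ D <;> simp [hx, Real.exp_log hM0]
  have hind : Integrable (D.indicator fun _ => M - 1) ν := (integrable_const _).indicator hD
  have hdv := integral_sub_log_integral_exp_le_toReal_klDiv hμν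
    ((integrable_const (Real.log M)).indicator hD)
    (by simp only [hexp]; exact hind.add (integrable_const 1))
  simp only [hexp] at hdv
  rw [integral_indicator_const _ hD, integral_add hind (integrable_const 1),
    integral_indicator_const _ hD] at hdv
  simp only [smul_eq_mul, integral_const, probReal_univ, one_mul] at hdv
  have hle : ν.real D * (M - 1) ≤ 1 := calc
    ν.real D * (M - 1) ≤ 1 / M * M :=
      mul_le_mul hνD (by linarith) (by linarith) (by positivity)
    _ = 1 := one_div_mul_cancel hM0.ne'
  have hnonneg : 0 ≤ ν.real D * (M - 1) := mul_nonneg measureReal_nonneg (sub_nonneg.2 hM)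
  have hlog : Real.log (ν.real D * (M - 1) + 1) ≤ Real.log 2 :=
    Real.log_le_log (by linarith) (by linarith)
  linarith

lemma exists_measureReal_le_one_div_card {ι : Type*} (ν : Measure α) [IsProbabilityMeasure ν]
    {s : Finset ι} (hs : s.Nonempty) {D : ι → Set α}
    (hdisj : (s : Set ι).PairwiseDisjoint D) (hD : ∀ i ∈ s, MeasurableSet (D i)) :
    ∃ i ∈ s, ν.real (D i) ≤ 1 / s.card := by
  refine Finset.exists_le_of_sum_le hs ?_
  have hcard : (s.card : ℝ) ≠ 0 := Nat.cast_ne_zero.2 hs.card_pos.ne'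
  rw [← measureReal_biUnion_finset hdisj hD, Finset.sum_const, nsmul_eq_mul,
    mul_one_div_cancel hcard]
  exact measureReal_le_one

/-- A form of Fano's inequality. The estimator is not assumed to be measurable. -/
lemma exists_one_sub_mul_log_card_le {ι Θ : Type*} {s : Finset ι} (hs : s.Nonempty) {θ : ι → Θ}
    (hθ : Set.InjOn θ s) {P : ι → Measure α} [∀ i, IsProbabilityMeasure (P i)] {Q : Measure α}
    [IsProbabilityMeasure Q] {K : ℝ≥0} (hK : ∀ i ∈ s, klDiv (P i) Q ≤ K) (est : α → Θ) :
    ∃ i ∈ s, (1 - (P i).real {x | est x ≠ θ i}) * Real.log s.card ≤ K + Real.log 2 := by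
  let D : ι → Set α := fun i => (toMeasurable (P i) {x | est x ≠ θ i})ᶜ
  have hD : ∀ i, MeasurableSet (D i) := fun i => (measurableSet_toMeasurable _ _).compl
  have hest : ∀ i, ∀ x ∈ D i, est x = θ i := fun i x hx =>
    of_not_not fun hne => hx (subset_toMeasurable _ _ hne)
  have hdisj : (s : Set ι).PairwiseDisjoint D := fun i hi j hj hij =>
    Set.disjoint_left.2 fun x hxi hxj =>
      hij (hθ hi hj ((hest i x hxi).symm.trans (hest j x hxj)))
  obtain ⟨i, hi, hQ⟩ := exists_measureReal_le_one_div_card Q hs hdisj fun i _ => hD i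
  refine ⟨i, hi, ?_⟩
  have hP : (P i).real (D i) = 1 - (P i).real {x | est x ≠ θ i} := by
    rw [probReal_compl_eq_one_sub (measurableSet_toMeasurable _ _), measureReal_def,
      measure_toMeasurable, measureReal_def]
  rw [← hP]
  refine (measureReal_mul_log_le_toReal_klDiv_add_log_two
    (ne_top_of_le_ne_top ENNReal.coe_ne_top (hK i hi)) (hD i)
    (Nat.one_le_cast.2 hs.card_pos) hQ).trans ?_
  gcongr
  exact ENNReal.toReal_le_coe_of_le_coe (hK i hi)

end KullbackLeibler

section Model

open InformationTheory

lemma dotProduct_self_nonneg {ι R : Type*} [Fintype ι] [Ring R] [LinearOrder R] [IsOrderedRing R]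
    (w : ι → R) : 0 ≤ w ⬝ᵥ w :=
  Finset.sum_nonneg fun _ _ => mul_self_nonneg _

lemma pi_tilted {ι : Type*} [Fintype ι] {α : ι → Type*} [∀ i, MeasurableSpace (α i)]
    (μ : ∀ i, Measure (α i)) [∀ i, SigmaFinite (μ i)] (f : ∀ i, α i → ℝ) :
    Measure.pi (fun i => (μ i).tilted (f i)) =
      (Measure.pi μ).tilted fun x => ∑ i, f i (x i) := by
  refine Measure.pi_eq fun s hs => ?_
  rw [tilted_apply_eq_ofReal_integral' _ (MeasurableSet.univ_pi hs)]
  simp only [tilted_apply_eq_ofReal_integral' _ (hs _), Real.exp_sum]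
  rw [Measure.restrict_pi_pi, integral_fintype_prod_eq_prod (fun i y => Real.exp (f i y)),
    ← ENNReal.ofReal_prod_of_nonneg fun i _ => integral_nonneg fun y => by positivity]
  simp only [← Finset.prod_div_distrib]
  rw [integral_fintype_prod_eq_prod
    (fun i y => Real.exp (f i y) / ∫ z, Real.exp (f i z) ∂μ i)]

variable {p : ℕ}

instance isProbabilityMeasure_gaussPi (m : Fin p → ℝ) : IsProbabilityMeasure (gaussPi m) := by
  unfold gaussPi
  infer_instance

instance isProbabilityMeasure_unlabeledLaw (m : Fin p → ℝ) :
    IsProbabilityMeasure (unlabeledLaw m) :=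
  ⟨by simp [unlabeledLaw, ENNReal.inv_two_add_inv_two]⟩

lemma gaussPi_eq_tilted (m : Fin p → ℝ) : gaussPi m = (gaussPi 0).tilted fun x => m ⬝ᵥ x := by
  have hcoord : ∀ j, (gaussianReal 0 1).tilted (fun x => m j * x) = gaussianReal (m j) 1 :=
    fun j => by rw [tilted_mul_gaussianReal 0 (m j) one_ne_zero, NNReal.coe_one, zero_add, one_mul]
  have htilt := pi_tilted (fun _ : Fin p => gaussianReal 0 1) fun j x => m j * x
  simp only [hcoord] at htilt
  exact htilt

lemma gaussPi_map_dotProduct (m w : Fin p → ℝ) :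
    (gaussPi m).map (fun x => w ⬝ᵥ x) = gaussianReal (w ⬝ᵥ m) (w ⬝ᵥ w).toNNReal := by
  have hmeas : Measurable fun x : Fin p → ℝ => w ⬝ᵥ x := by fun_prop
  have := Measure.isProbabilityMeasure_map (μ := gaussPi m) hmeas.aemeasurable
  refine Measure.ext_of_charFun (funext fun t => ?_)
  rw [charFun_gaussianReal, charFun_apply_real, integral_map hmeas.aemeasurable (by fun_prop),
    Real.coe_toNNReal _ (dotProduct_self_nonneg w)]
  have hprod : ∀ x : Fin p → ℝ, Complex.exp (t * ((w ⬝ᵥ x : ℝ)) * Complex.I)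
      = ∏ i, Complex.exp ((t * w i : ℝ) * x i * Complex.I) := fun x => by
    rw [← Complex.exp_sum, dotProduct]
    push_cast
    rw [Finset.mul_sum, Finset.sum_mul]
    simp only [mul_assoc]
  simp only [hprod]
  rw [gaussPi, integral_fintype_prod_eq_prod
    (fun i (y : ℝ) => Complex.exp ((t * w i : ℝ) * y * Complex.I))]
  simp only [← charFun_apply_real, charFun_gaussianReal]
  rw [← Complex.exp_sum, dotProduct, dotProduct]
  push_cast
  rw [Finset.mul_sum, Finset.sum_mul, Finset.sum_mul, Finset.sum_div, ← Finset.sum_sub_distrib]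
  congr 2 with i
  ring

lemma integral_exp_dotProduct_gaussPi (m w : Fin p → ℝ) :
    ∫ x, Real.exp (w ⬝ᵥ x) ∂gaussPi m = Real.exp (w ⬝ᵥ m + w ⬝ᵥ w / 2) := by
  have hmgf := mgf_gaussianReal (gaussPi_map_dotProduct m w) 1
  simpa only [mgf, one_mul, mul_one, one_pow, Real.coe_toNNReal _ (dotProduct_self_nonneg w)]
    using hmgf

lemma integrable_comp_dotProduct_gaussPi {m w : Fin p → ℝ} {F : ℝ → ℝ}
    (hF : Integrable F (gaussianReal (w ⬝ᵥ m) (w ⬝ᵥ w).toNNReal)) :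
    Integrable (fun x => F (w ⬝ᵥ x)) (gaussPi m) := by
  rw [← gaussPi_map_dotProduct] at hF
  exact hF.comp_measurable (by fun_prop)

lemma integrable_exp_dotProduct_gaussPi (m w : Fin p → ℝ) :
    Integrable (fun x => Real.exp (w ⬝ᵥ x)) (gaussPi m) := by
  simpa only [one_mul] using
    integrable_comp_dotProduct_gaussPi (integrable_exp_mul_gaussianReal (μ := w ⬝ᵥ m) 1)

lemma gaussPi_map_neg (m : Fin p → ℝ) : (gaussPi m).map (fun x => -x) = gaussPi (-m) := by
  have hmap := Measure.pi_map_pi (μ := fun j => gaussianReal (m j) 1) (f := fun _ y => -y)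
    fun _ => measurable_neg.aemeasurable
  simp only [gaussianReal_map_neg] at hmap
  exact hmap

lemma integral_unlabeledLaw_of_even {m : Fin p → ℝ} {F : (Fin p → ℝ) → ℝ} (heven : F.Even)
    (hF : Integrable F (gaussPi m)) : ∫ x, F x ∂unlabeledLaw m = ∫ x, F x ∂gaussPi m := by
  have hpres : MeasurePreserving (fun x : Fin p → ℝ => -x) (gaussPi m) (gaussPi (-m)) :=
    ⟨measurable_neg, gaussPi_map_neg m⟩
  have hemb : MeasurableEmbedding fun x : Fin p → ℝ => -x :=
    (MeasurableEquiv.neg _).measurableEmbedding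
  have hcomp : F ∘ (fun x => -x) = F := funext heven
  have hF' : Integrable F (gaussPi (-m)) := by
    rwa [← hpres.integrable_comp_emb hemb, hcomp]
  have hflip : ∫ x, F x ∂gaussPi (-m) = ∫ x, F x ∂gaussPi m := by
    rw [← hpres.integral_comp hemb]
    exact congrArg (fun G => ∫ x, G x ∂gaussPi m) hcomp
  change ∫ x, F x ∂((2 : ℝ≥0∞)⁻¹ • gaussPi m + (2 : ℝ≥0∞)⁻¹ • gaussPi (-m)) = _
  rw [integral_add_measure (hF.smul_measure (by simp)) (hF'.smul_measure (by simp)),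
    integral_smul_measure, integral_smul_measure, hflip]
  simp only [ENNReal.toReal_inv, ENNReal.toReal_ofNat, smul_eq_mul]
  ring

lemma integrable_comp_dotProduct_unlabeledLaw {m w : Fin p → ℝ} {F : ℝ → ℝ}
    (hF : ∀ a v, Integrable F (gaussianReal a v)) :
    Integrable (fun x => F (w ⬝ᵥ x)) (unlabeledLaw m) :=
  ((integrable_comp_dotProduct_gaussPi (hF _ _)).smul_measure (by simp)).add_measure
    ((integrable_comp_dotProduct_gaussPi (hF _ _)).smul_measure (by simp))

lemma integrable_cosh_dotProduct_gaussPi (m w : Fin p → ℝ) :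
    Integrable (fun x => Real.cosh (w ⬝ᵥ x)) (gaussPi m) := by
  simp only [Real.cosh_eq, ← neg_dotProduct]
  exact ((integrable_exp_dotProduct_gaussPi m w).add
    (integrable_exp_dotProduct_gaussPi m (-w))).div_const 2

lemma integral_cosh_dotProduct_gaussPi_zero (w : Fin p → ℝ) :
    ∫ x, Real.cosh (w ⬝ᵥ x) ∂gaussPi 0 = Real.exp (w ⬝ᵥ w / 2) := by
  simp only [Real.cosh_eq, ← neg_dotProduct]
  rw [integral_div, integral_add (integrable_exp_dotProduct_gaussPi 0 w)
      (integrable_exp_dotProduct_gaussPi 0 (-w)), integral_exp_dotProduct_gaussPi,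
    integral_exp_dotProduct_gaussPi, neg_dotProduct_neg, dotProduct_zero, dotProduct_zero,
    zero_add, add_self_div_two]

lemma unlabeledLaw_eq_tilted (m : Fin p → ℝ) :
    unlabeledLaw m = (gaussPi 0).tilted fun x => Real.log (Real.cosh (m ⬝ᵥ x)) := by
  have hhalf : (2 : ℝ≥0∞)⁻¹ = ENNReal.ofReal 2⁻¹ := by
    rw [ENNReal.ofReal_inv_of_pos two_pos, ENNReal.ofReal_ofNat]
  change (2 : ℝ≥0∞)⁻¹ • gaussPi m + (2 : ℝ≥0∞)⁻¹ • gaussPi (-m) = _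
  rw [gaussPi_eq_tilted m, gaussPi_eq_tilted (-m)]
  simp only [Measure.tilted, Real.exp_log (Real.cosh_pos _), integral_exp_dotProduct_gaussPi,
    integral_cosh_dotProduct_gaussPi_zero, neg_dotProduct_neg, dotProduct_zero, zero_add]
  rw [← withDensity_smul _ (by fun_prop), ← withDensity_smul _ (by fun_prop),
    ← withDensity_add_left (by fun_prop)]
  congr 1 with x
  simp only [Pi.add_apply, Pi.smul_apply, smul_eq_mul, hhalf, neg_dotProduct]
  rw [← ENNReal.ofReal_mul (by positivity), ← ENNReal.ofReal_mul (by positivity),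
    ← ENNReal.ofReal_add (by positivity) (by positivity), Real.cosh_eq]
  congr 1
  ring

lemma integral_log_cosh_dotProduct_unlabeledLaw {m c : Fin p → ℝ} (hcm : c ⬝ᵥ m = c ⬝ᵥ c) :
    ∫ x, Real.log (Real.cosh (c ⬝ᵥ x)) ∂unlabeledLaw m = meanLogCosh √(c ⬝ᵥ c) := by
  set r := √(c ⬝ᵥ c)
  have hr_sq : r * r = c ⬝ᵥ c := Real.mul_self_sqrt (dotProduct_self_nonneg c)
  have hlaw : (gaussPi m).map (fun x => c ⬝ᵥ x) = (gaussianReal r 1).map (fun y => r * y) := by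
    rw [gaussPi_map_dotProduct, gaussianReal_map_const_mul, hcm, ← hr_sq]
    congr 1
    ext
    simp [sq, mul_self_nonneg]
  have hint : Integrable (fun x => Real.log (Real.cosh (c ⬝ᵥ x))) (gaussPi m) :=
    integrable_comp_dotProduct_gaussPi (integrable_log_cosh_comp (integrable_id_gaussianReal _ _))
  rw [integral_unlabeledLaw_of_even
    (fun x => by rw [dotProduct_neg, Real.cosh_neg]) hint, meanLogCosh,
    ← integral_map (φ := fun x => c ⬝ᵥ x) (by fun_prop) continuous_log_cosh.aestronglyMeasurable,
    hlaw, integral_map (by fun_prop) continuous_log_cosh.aestronglyMeasurable]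

/-- The condition `c ⬝ᵥ m = c ⬝ᵥ c` says that `c` is the orthogonal projection of `m` on the line
of `c`, so that `c ⬝ᵥ x` has the same law under `unlabeledLaw m` and under `unlabeledLaw c`. -/
lemma klDiv_unlabeledLaw {m c : Fin p → ℝ} (hcm : c ⬝ᵥ m = c ⬝ᵥ c) :
    klDiv (unlabeledLaw m) (unlabeledLaw c) = ENNReal.ofReal
      (meanLogCosh √(m ⬝ᵥ m) - meanLogCosh √(c ⬝ᵥ c) - (m ⬝ᵥ m - c ⬝ᵥ c) / 2) := by
  have hexp : ∀ w : Fin p → ℝ,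
      Integrable (fun x => Real.exp (Real.log (Real.cosh (w ⬝ᵥ x)))) (gaussPi 0) := fun w => by
    simpa only [Real.exp_log (Real.cosh_pos _)] using integrable_cosh_dotProduct_gaussPi 0 w
  have hlog_cosh : ∀ w : Fin p → ℝ,
      Integrable (fun x => Real.log (Real.cosh (w ⬝ᵥ x))) (unlabeledLaw m) := fun w =>
    integrable_comp_dotProduct_unlabeledLaw (F := fun z => Real.log (Real.cosh z))
      fun a v => integrable_log_cosh_comp (integrable_id_gaussianReal a v)
  have hkl := klDiv_tilted_tilted (gaussPi 0) (hexp m) (hexp c)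
  simp only [← unlabeledLaw_eq_tilted, Real.exp_log (Real.cosh_pos _),
    integral_cosh_dotProduct_gaussPi_zero, Real.log_exp] at hkl
  rw [hkl (hlog_cosh m) (hlog_cosh c), integral_log_cosh_dotProduct_unlabeledLaw rfl,
    integral_log_cosh_dotProduct_unlabeledLaw hcm]
  congr 1
  ring

lemma klDiv_unlabeledLaw_le {m c : Fin p → ℝ} (hcm : c ⬝ᵥ m = c ⬝ᵥ c) :
    klDiv (unlabeledLaw m) (unlabeledLaw c) ≤
      ENNReal.ofReal ((m ⬝ᵥ m - c ⬝ᵥ c) / 2 * min 1 (m ⬝ᵥ m)) := by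
  have hpyth : (m - c) ⬝ᵥ (m - c) = m ⬝ᵥ m - c ⬝ᵥ c := by
    rw [sub_dotProduct, dotProduct_sub, dotProduct_sub, dotProduct_comm m c, hcm]
    ring
  have hle : c ⬝ᵥ c ≤ m ⬝ᵥ m := sub_nonneg.1 (hpyth ▸ dotProduct_self_nonneg (m - c))
  have hgrowth := meanLogCosh_sub_le (Real.sqrt_nonneg _) (Real.sqrt_le_sqrt hle)
  rw [Real.sq_sqrt (dotProduct_self_nonneg m), Real.sq_sqrt (dotProduct_self_nonneg c)] at hgrowth
  rw [klDiv_unlabeledLaw hcm]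
  refine ENNReal.ofReal_le_ofReal ?_
  linarith

lemma muVec_dotProduct_muVec (k : ℕ) {lam : ℝ} (hlam : 0 ≤ lam) (S T : Finset (Fin p)) :
    muVec p k lam S ⬝ᵥ muVec p k lam T = (S ∩ T).card * (lam / k) := by
  have hterm : ∀ j, muVec p k lam S j * muVec p k lam T j
      = if j ∈ S ∩ T then lam / k else 0 := fun j => by
    have hsq : √(lam / k) * √(lam / k) = lam / k := Real.mul_self_sqrt (by positivity)
    simp only [muVec, mul_ite, ite_mul, hsq, mul_zero, zero_mul, Finset.mem_inter]
    by_cases hS : j ∈ S <;> by_cases hT : j ∈ T <;> simp only [hS, hT, if_true, if_false, and_true,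
      and_false, and_self]
  simp only [dotProduct, hterm, Finset.sum_ite_mem, Finset.univ_inter, Finset.sum_const,
    nsmul_eq_mul]

lemma klDiv_unlabeledLaw_muVec_insert_le {k : ℕ} {lam : ℝ} (hlam : 0 ≤ lam)
    {S : Finset (Fin p)} (hS : S.card + 1 = k) {j : Fin p} (hj : j ∉ S) :
    klDiv (unlabeledLaw (muVec p k lam (insert j S)))
      (unlabeledLaw (muVec p k lam S)) ≤ ENNReal.ofReal (lam / k / 2 * min 1 lam) := by
  have hinter : S ∩ insert j S = S := Finset.inter_eq_left.2 (Finset.subset_insert j S)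
  have hcard : (k : ℝ) = S.card + 1 := by
    rw [← hS, Nat.cast_succ]
  have hk : (k : ℝ) ≠ 0 := by
    rw [hcard]
    positivity
  have hkl := klDiv_unlabeledLaw_le (m := muVec p k lam (insert j S)) (c := muVec p k lam S)
    (by rw [muVec_dotProduct_muVec k hlam, muVec_dotProduct_muVec k hlam, hinter,
      Finset.inter_self])
  rw [muVec_dotProduct_muVec k hlam, muVec_dotProduct_muVec k hlam, Finset.inter_self,
    Finset.inter_self, Finset.card_insert_of_notMem hj, hS, ← sub_mul, hcard,
    add_sub_cancel_left, one_mul, ← hcard, mul_div_cancel₀ _ hk] at hkl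
  exact hkl

end Model

section Estimation

open InformationTheory

/-- The probability that the estimator `est` misses the support `S` of the mean, on a sample of
size `n`. It is an outer measure when `est` is not measurable. -/
def errorProb {p n : ℕ} (k : ℕ) (lam : ℝ) (est : (Fin n → (Fin p → ℝ)) → Finset (Fin p))
    (S : Finset (Fin p)) : ℝ :=
  (Measure.pi fun _ : Fin n => unlabeledLaw (muVec p k lam S)).real {d | est d ≠ S}

/-- The largest error probability over the supports of size `k`. A set `S` of another size
contributes the supremum of an empty family, which is `0` in `ℝ`. -/
def worstCaseError {p n : ℕ} (k : ℕ) (lam : ℝ)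
    (est : (Fin n → (Fin p → ℝ)) → Finset (Fin p)) : ℝ :=
  ⨆ S ∈ Finset.univ.powersetCard k, errorProb k lam est S

variable {p k n : ℕ} {lam : ℝ} (est : (Fin n → (Fin p → ℝ)) → Finset (Fin p))

lemma iSup_errorProb_le_one (S : Finset (Fin p)) :
    ⨆ _ : S ∈ Finset.univ.powersetCard k, errorProb k lam est S ≤ 1 :=
  Real.iSup_le (fun _ => measureReal_le_one) zero_le_one

lemma worstCaseError_le_one : worstCaseError k lam est ≤ 1 :=
  Real.iSup_le (iSup_errorProb_le_one est) zero_le_one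

lemma errorProb_le_worstCaseError {S : Finset (Fin p)} (hS : S.card = k) :
    errorProb k lam est S ≤ worstCaseError k lam est := by
  have hmem : S ∈ Finset.univ.powersetCard k := Finset.mem_powersetCard_univ.2 hS
  have hbdd : BddAbove (Set.range fun S : Finset (Fin p) =>
      ⨆ _ : S ∈ Finset.univ.powersetCard k, errorProb k lam est S) :=
    ⟨1, Set.forall_mem_range.2 (iSup_errorProb_le_one est)⟩
  exact (ciSup_pos (f := fun _ => errorProb k lam est S) hmem).ge.trans (le_ciSup hbdd S)

lemma exists_one_sub_errorProb_mul_log_le (hlam : 0 ≤ lam) (hk : 1 ≤ k) (hkp : k ≤ p) :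
    ∃ S : Finset (Fin p), S.card = k ∧
      (1 - errorProb k lam est S) * Real.log (p - k + 1) ≤
        n * (lam / k / 2 * min 1 lam) + Real.log 2 := by
  obtain ⟨S₀, -, hS₀⟩ := Finset.exists_subset_card_eq (s := (Finset.univ : Finset (Fin p)))
    (n := k - 1) (by rw [Finset.card_fin]; omega)
  have hcard : (S₀ᶜ.card : ℝ) = p - k + 1 := by
    rw [Finset.card_compl, hS₀, Fintype.card_fin, Nat.sub_sub_right p hk, Nat.sub_add_comm hkp]
    push_cast [hkp]
    ring
  have hne : S₀ᶜ.Nonempty := Finset.card_pos.1 <| by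
    rw [Finset.card_compl, hS₀, Fintype.card_fin]
    omega
  have hinj : Set.InjOn (fun j => insert j S₀) (S₀ᶜ : Finset (Fin p)) := by
    rw [Finset.coe_compl]
    exact Finset.insert_inj_on S₀
  have hkl : ∀ j ∈ S₀ᶜ, klDiv
      (Measure.pi fun _ : Fin n => unlabeledLaw (muVec p k lam (insert j S₀)))
      (Measure.pi fun _ : Fin n => unlabeledLaw (muVec p k lam S₀)) ≤
        (n * (lam / k / 2 * min 1 lam).toNNReal : ℝ≥0) := fun j hj => by
    rw [klDiv_pi_fin, Finset.sum_const, Finset.card_fin, nsmul_eq_mul, ENNReal.coe_mul,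
      ENNReal.coe_natCast]
    gcongr
    exact klDiv_unlabeledLaw_muVec_insert_le hlam (by omega) (Finset.mem_compl.1 hj)
  obtain ⟨j, hj, hfano⟩ := exists_one_sub_mul_log_card_le hne hinj hkl est
  refine ⟨insert j S₀, ?_, ?_⟩
  · rw [Finset.card_insert_of_notMem (Finset.mem_compl.1 hj), hS₀]
    omega
  · rwa [hcard, NNReal.coe_mul, NNReal.coe_natCast, Real.coe_toNNReal _ (by positivity)] at hfano

lemma sub_log_two_div_log_le_worstCaseError {δ : ℝ} (hlam : 0 < lam) (hkp : k < p)
    (hn : (n : ℝ) < 2 * (1 - δ) * k / lam ^ 2 * Real.log (p - k + 1) * max 1 lam) :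
    δ - Real.log 2 / Real.log (p - k + 1) ≤ worstCaseError k lam est := by
  have hk : k ≠ 0 := by
    rintro rfl
    simp only [Nat.cast_zero, mul_zero, zero_div, zero_mul] at hn
    exact hn.not_ge n.cast_nonneg
  have hlog : 0 < Real.log (p - k + 1) := Real.log_pos (by
    have : (k : ℝ) < p := Nat.cast_lt.2 hkp
    linarith)
  obtain ⟨S, hS, hbound⟩ :=
    exists_one_sub_errorProb_mul_log_le est hlam.le (Nat.one_le_iff_ne_zero.2 hk) hkp.le
  have hkl : n * (lam / k / 2 * min 1 lam) ≤ (1 - δ) * Real.log (p - k + 1) := calc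
    n * (lam / k / 2 * min 1 lam)
      ≤ 2 * (1 - δ) * k / lam ^ 2 * Real.log (p - k + 1) * max 1 lam *
          (lam / k / 2 * min 1 lam) := by gcongr
    _ = (1 - δ) * Real.log (p - k + 1) * (min 1 lam * max 1 lam) / lam := by field_simp
    _ = (1 - δ) * Real.log (p - k + 1) := by
        rw [min_mul_max, one_mul, mul_div_cancel_right₀ _ hlam.ne']
  refine le_trans ?_ (errorProb_le_worstCaseError est hS)
  rw [sub_le_comm, le_div_iff₀ hlog]
  linarith

end Estimation

lemma tendsto_natCast_sub_natCast_of_tendsto_div_zero {ι : Type*} {l : Filter ι} {p k : ι → ℕ}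
    (hp : Tendsto p l atTop) (hkp : Tendsto (fun t => (k t : ℝ) / p t) l (nhds 0)) :
    Tendsto (fun t => (p t : ℝ) - k t) l atTop := by
  have hp' : Tendsto (fun t => (p t : ℝ)) l atTop := tendsto_natCast_atTop_atTop.comp hp
  refine tendsto_atTop_mono' l ?_ (hp'.atTop_div_const two_pos)
  filter_upwards [hkp.eventually_lt_const one_half_pos, hp'.eventually_gt_atTop 0] with t hkt hpt
  rw [div_lt_iff₀ hpt] at hkt
  linarith

theorem stmt1_general (δ : ℝ) {lam : ℕ → ℝ} (hlam : ∀ t, 0 < lam t) {p k n : ℕ → ℕ}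
    (hpk : Tendsto (fun t => (p t : ℝ) - k t) atTop atTop)
    (hbound : ∀ t, (n t : ℝ) < 2 * (1 - δ) * (k t : ℝ) / lam t ^ 2 *
      Real.log ((p t : ℝ) - (k t : ℝ) + 1) * max 1 (lam t))
    (est : ∀ t : ℕ, (Fin (n t) → (Fin (p t) → ℝ)) → Finset (Fin (p t))) :
    δ ≤ liminf (fun t => worstCaseError (k t) (lam t) (est t)) atTop := by
  have hlog : Tendsto (fun t => Real.log ((p t : ℝ) - k t + 1)) atTop atTop :=
    Real.tendsto_log_atTop.comp (tendsto_atTop_add_const_right _ 1 hpk)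
  have hlower : Tendsto (fun t => δ - Real.log 2 / Real.log ((p t : ℝ) - k t + 1)) atTop
      (nhds δ) := by
    simpa only [sub_zero] using (hlog.const_div_atTop (Real.log 2)).const_sub δ
  have hcobdd : IsCoboundedUnder (· ≥ ·) atTop
      fun t => worstCaseError (k t) (lam t) (est t) :=
    (isBoundedUnder_of ⟨1, fun t => worstCaseError_le_one (est t)⟩).isCoboundedUnder_ge
  rw [← hlower.liminf_eq]
  refine liminf_le_liminf ?_ hlower.isBoundedUnder_ge hcobdd
  filter_upwards [hpk.eventually_gt_atTop 0] with t ht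
  exact sub_log_two_div_log_le_worstCaseError (est t) (hlam t) (Nat.cast_lt.1 (sub_pos.1 ht))
    (hbound t)

/-- Theorem 2: in an asymptotic regime `(n, p, k) → ∞` with `k/p → 0` and
`n < 2(1-δ) (k/λ²) log(p-k+1) max{1,λ}`, any sequence of support estimators based on the `n`
unlabeled samples has worst-case error probability at least `δ` asymptotically. -/
theorem stmt1 (δ lam : ℝ) (hδ : δ ∈ Set.Ioo (0 : ℝ) 1) (hlam : 0 < lam)
    (p k n : ℕ → ℕ)
    (hp : Tendsto p atTop atTop) (hk : Tendsto k atTop atTop) (hn : Tendsto n atTop atTop)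
    (hkp : Tendsto (fun t => (k t : ℝ) / (p t : ℝ)) atTop (nhds 0))
    (hbound : ∀ t, (n t : ℝ) <
      2 * (1 - δ) * (k t : ℝ) / lam ^ 2 * Real.log ((p t : ℝ) - (k t : ℝ) + 1) * max 1 lam)
    (est : ∀ t : ℕ, (Fin (n t) → (Fin (p t) → ℝ)) → Finset (Fin (p t))) :
    δ ≤ liminf (fun t : ℕ =>
      ⨆ S ∈ Finset.univ.powersetCard (k t),
        ((Measure.pi fun _ : Fin (n t) => unlabeledLaw (muVec (p t) (k t) lam S))
            {d | est t d ≠ S}).toReal) atTop :=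
  stmt1_general δ (fun _ => hlam) (tendsto_natCast_sub_natCast_of_tendsto_div_zero hp hkp) hbound
    est
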